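/- Let B_r ⊂ ℝ^N be an open ball, let u : B_r → ℝ be Lebesgue integrable, and write (u)_r = (1/|B_r|)∫_{B_r} u dx for its average. Then for every L ∈ ℝ one has ∫_{B_r} G(|u − (u)_r|) dx ≤ 2^{g₀+1}·(g₀ + 1)·∫_{B_r} G(|u − L|) dx. -/

import Mathlib

open MeasureTheory

theorem G_aux (g₀ : ℝ) (h1 : 1 ≤ g₀)
    (g g' : ℝ → ℝ)
    (hg_cont : ContinuousOn g (Set.Ici 0))
    (hg_zero : g 0 = 0)
    (hg_pos : ∀ s : ℝ, 0 < s → 0 < g s)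
    (hg_diff : ∀ s : ℝ, 0 < s → HasDerivAt g (g' s) s)
    (hg0 : ∀ s : ℝ, 0 < s → 0 ≤ g' s)
    (hg1 : ∀ s : ℝ, 0 < s → s * g' s ≤ g₀ * g s)
    (G : ℝ → ℝ) (hG : ∀ t : ℝ, G t = ∫ s in (0:ℝ)..t, g s) :
    Continuous (fun t => G |t|) ∧ ContinuousOn G (Set.Ici 0) ∧ MonotoneOn G (Set.Ici 0) ∧
    ConvexOn ℝ (Set.Ici 0) G ∧ G 0 = 0 ∧ ∀ t, 0 ≤ t → G (2 * t) ≤ (2:ℝ) ^ (g₀ + 1) * G t := by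
  have hc : Continuous (fun s => g |s|) :=
    hg_cont.comp_continuous continuous_abs (fun x => abs_nonneg x)
  have hG' : ∀ t, 0 ≤ t → G t = ∫ s in (0:ℝ)..t, g |s| := by
    intro t ht
    rw [hG]
    apply intervalIntegral.integral_congr
    intro s hs
    rw [Set.uIcc_of_le ht] at hs
    simp only [abs_of_nonneg hs.1]
  have hFd : ∀ t, HasDerivAt (fun t => ∫ s in (0:ℝ)..t, g |s|) (g |t|) t := fun t =>
    hc.integral_hasStrictDerivAt 0 t |>.hasDerivAt
  have hFc : Continuous (fun t => ∫ s in (0:ℝ)..t, g |s|) :=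
    continuous_iff_continuousAt.2 fun t => (hFd t).continuousAt
  have hnn : ∀ s, 0 ≤ g |s| := by
    intro s
    rcases (abs_nonneg s).eq_or_lt with h | h
    · rw [← h, hg_zero]
    · exact (hg_pos _ h).le
  have hmono : MonotoneOn g (Set.Ici 0) := by
    apply monotoneOn_of_deriv_nonneg (convex_Ici 0) hg_cont
    · intro s hs
      rw [interior_Ici] at hs
      exact (hg_diff s hs).differentiableAt.differentiableWithinAt
    · intro s hs
      rw [interior_Ici] at hs
      rw [(hg_diff s hs).deriv]
      exact hg0 s hs
  have hFm : Monotone (fun t => ∫ s in (0:ℝ)..t, g |s|) :=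
    monotone_of_deriv_nonneg (fun t => (hFd t).differentiableAt)
      (fun t => by rw [(hFd t).deriv]; exact hnn t)
  have hEq : Set.EqOn (fun t => ∫ s in (0:ℝ)..t, g |s|) G (Set.Ici 0) := fun t ht => (hG' t ht).symm
  have hFconv : ConvexOn ℝ (Set.Ici 0) (fun t => ∫ s in (0:ℝ)..t, g |s|) := by
    apply MonotoneOn.convexOn_of_deriv (convex_Ici 0) hFc.continuousOn
      (fun t _ => (hFd t).differentiableAt.differentiableWithinAt)
    rw [interior_Ici]
    intro a ha b hb hab
    rw [(hFd a).deriv, (hFd b).deriv, abs_of_pos ha, abs_of_pos hb]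
    exact hmono (Set.mem_Ici.2 (le_of_lt ha)) (Set.mem_Ici.2 (le_of_lt hb)) hab
  have hanti : AntitoneOn (fun s => g s * s ^ (-g₀)) (Set.Ioi 0) := by
    have hd : ∀ s : ℝ, 0 < s → HasDerivAt (fun s => g s * s ^ (-g₀))
        (g' s * s ^ (-g₀) + g s * (-g₀ * s ^ (-g₀ - 1))) s := fun s hs =>
      (hg_diff s hs).mul (Real.hasDerivAt_rpow_const (Or.inl hs.ne'))
    apply antitoneOn_of_deriv_nonpos (convex_Ioi 0)
    · intro s hs
      exact (hd s hs).continuousAt.continuousWithinAt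
    · intro s hs
      rw [interior_Ioi] at hs
      exact (hd s hs).differentiableAt.differentiableWithinAt
    · intro s hs
      rw [interior_Ioi] at hs
      have hs' : 0 < s := hs
      rw [(hd s hs).deriv]
      have e : s ^ (-g₀) = s * s ^ (-g₀ - 1) := by
        rw [Real.rpow_sub_one hs'.ne']; field_simp
      have p : 0 < s ^ (-g₀ - 1) := Real.rpow_pos_of_pos hs' _
      rw [e]
      nlinarith [hg1 s hs]
  have hdbl : ∀ s, 0 ≤ s → g (2 * s) ≤ (2:ℝ) ^ g₀ * g s := by
    intro s hs
    rcases hs.eq_or_lt with h | h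
    · rw [← h]; simp [hg_zero]
    · have := hanti (show s ∈ Set.Ioi 0 from h) (show 2 * s ∈ Set.Ioi 0 from by
        simp only [Set.mem_Ioi]; linarith) (by linarith)
      simp only at this
      rw [Real.mul_rpow (by norm_num) hs, Real.rpow_neg (by norm_num : (0:ℝ) ≤ 2)] at this
      have p : 0 < s ^ (-g₀) := Real.rpow_pos_of_pos h _
      have q : (0:ℝ) < 2 ^ g₀ := by positivity
      have : g (2 * s) * ((2:ℝ) ^ g₀)⁻¹ ≤ g s := by
        apply le_of_mul_le_mul_right _ p
        linarith
      rw [← div_eq_mul_inv, div_le_iff₀ q] at this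
      linarith
  refine ⟨?_, hFc.continuousOn.congr hEq.symm, ?_, hFconv.congr hEq, by simp [hG], ?_⟩
  · have : (fun t => G |t|) = (fun t => ∫ s in (0:ℝ)..t, g |s|) ∘ fun t => |t| := by
      ext t; exact hG' _ (abs_nonneg t)
    rw [this]
    exact hFc.comp continuous_abs
  · exact (hFm.monotoneOn _).congr hEq
  · intro t ht
    rw [hG' t ht, hG' _ (by linarith)]
    have e : ∫ s in (0:ℝ)..(2*t), g |s| = 2 * ∫ s in (0:ℝ)..t, g |2 * s| := by
      rw [intervalIntegral.integral_comp_mul_left (fun s => g |s|) (two_ne_zero)]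
      simp
    rw [e, Real.rpow_add (by norm_num), Real.rpow_one, mul_comm ((2:ℝ) ^ g₀) 2, mul_assoc]
    refine mul_le_mul_of_nonneg_left ?_ (by norm_num)
    rw [← intervalIntegral.integral_const_mul]
    apply intervalIntegral.integral_mono_on ht
    · exact (hc.comp (continuous_const.mul continuous_id)).intervalIntegrable _ _
    · exact (continuous_const.mul hc).intervalIntegrable _ _
    · intro s hs
      rw [abs_mul, abs_two]
      exact hdbl _ (abs_nonneg s)

/-- Inequality (2.8): for a ball `B_r ⊂ ℝ^N`, an integrable `u` with average
`(u)_r`, and any `L ∈ ℝ`,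
`∫_{B_r} G(|u − (u)_r|) ≤ 2^{g₀+1}·(g₀+1)·∫_{B_r} G(|u − L|)`. -/
theorem G_average_bound (N : ℕ)
    (δ g₀ : ℝ) (hδ : 1 ≤ δ) (hδg₀ : δ ≤ g₀)
    (g g' : ℝ → ℝ)
    (hg_cont : ContinuousOn g (Set.Ici 0))
    (hg_zero : g 0 = 0)
    (hg_pos : ∀ s : ℝ, 0 < s → 0 < g s)
    (hg_diff : ∀ s : ℝ, 0 < s → HasDerivAt g (g' s) s)
    (hg'_cont : ContinuousOn g' (Set.Ioi 0))
    (hg_ratio : ∀ s : ℝ, 0 < s → δ ≤ s * g' s / g s ∧ s * g' s / g s ≤ g₀)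
    (G : ℝ → ℝ) (hG : ∀ t : ℝ, G t = ∫ s in (0:ℝ)..t, g s)
    (x₀ : EuclideanSpace ℝ (Fin N)) (r : ℝ) (hr : 0 < r)
    (u : EuclideanSpace ℝ (Fin N) → ℝ)
    (hu : IntegrableOn u (Metric.ball x₀ r) volume) :
    ∀ L : ℝ,
      ∫⁻ x in Metric.ball x₀ r,
          ENNReal.ofReal (G |u x - ⨍ y in Metric.ball x₀ r, u y ∂volume|)
            ∂volume ≤
        ENNReal.ofReal ((2 : ℝ) ^ (g₀ + 1) * (g₀ + 1)) *
          ∫⁻ x in Metric.ball x₀ r, ENNReal.ofReal (G |u x - L|) ∂volume := by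
  intro L
  have h1 : 1 ≤ g₀ := hδ.trans hδg₀
  obtain ⟨hcabs, hGc, hGm, hGv, hGz, hG2⟩ := G_aux g₀ h1 g g' hg_cont hg_zero hg_pos hg_diff
    (fun s hs => by
      have h := (hg_ratio s hs).1
      rw [le_div_iff₀ (hg_pos s hs)] at h
      have : 0 < δ * g s := mul_pos (by linarith) (hg_pos s hs)
      by_contra hn
      push Not at hn
      nlinarith)
    (fun s hs => (div_le_iff₀ (hg_pos s hs)).1 (hg_ratio s hs).2) G hG
  have hGnn : ∀ t, 0 ≤ t → 0 ≤ G t := fun t ht => hGz ▸ hGm (Set.mem_Ici.2 le_rfl) ht ht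
  have hC : (0:ℝ) < (2 : ℝ) ^ (g₀ + 1) := by positivity
  have hCC : (2 : ℝ) ^ (g₀ + 1) ≤ (2 : ℝ) ^ (g₀ + 1) * (g₀ + 1) := by nlinarith
  set μ : Measure (EuclideanSpace ℝ (Fin N)) := volume.restrict (Metric.ball x₀ r) with hμ
  have hu : Integrable u μ := hu
  set a : ℝ := ⨍ y, u y ∂μ with ha
  have : IsFiniteMeasure μ := ⟨by rw [hμ, Measure.restrict_apply_univ]; exact measure_ball_lt_top⟩
  have : NeZero μ := ⟨by
    rw [hμ, Ne, Measure.restrict_eq_zero]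
    exact (Metric.measure_ball_pos volume x₀ hr).ne'⟩
  by_cases hI : ∫⁻ x, ENNReal.ofReal (G |u x - L|) ∂μ = ⊤
  · rw [hI, ENNReal.mul_top]
    · exact le_top
    · simp only [ne_eq, ENNReal.ofReal_eq_zero, not_le]; nlinarith
  have huL : Integrable (fun x => u x - L) μ := hu.sub (integrable_const L)
  have hm : ∀ c, AEStronglyMeasurable (fun x => G |u x - c|) μ := fun c =>
    hcabs.comp_aestronglyMeasurable (hu.sub (integrable_const c)).aestronglyMeasurable
  have hint : Integrable (fun x => G |u x - L|) μ := by
    refine ⟨hm L, ?_⟩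
    rw [hasFiniteIntegral_iff_ofReal (Filter.Eventually.of_forall fun x => hGnn _ (abs_nonneg _))]
    exact lt_top_iff_ne_top.2 hI
  have hJ : G |a - L| ≤ ⨍ x, G |u x - L| ∂μ := by
    have hj := hGv.map_average_le hGc isClosed_Ici (f := fun x => |u x - L|)
      (Filter.Eventually.of_forall fun x => Set.mem_Ici.2 (abs_nonneg _)) huL.abs hint
    refine le_trans (hGm (Set.mem_Ici.2 (abs_nonneg _)) ?_ ?_) hj
    · rw [Set.mem_Ici, average_eq]
      exact smul_nonneg (by positivity) (integral_nonneg fun x => abs_nonneg _)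
    · have hpos : 0 < μ.real Set.univ := measureReal_univ_pos
      have e : a - L = (μ.real Set.univ)⁻¹ * ∫ x, (u x - L) ∂μ := by
        rw [ha, average_eq, integral_sub hu (integrable_const L), integral_const, smul_eq_mul,
          smul_eq_mul]
        field_simp
      rw [e, average_eq, smul_eq_mul, abs_mul, abs_of_pos (inv_pos.2 hpos)]
      gcongr
      exact abs_integral_le_integral_abs
  have hpt : ∀ x, G |u x - a| ≤ (2:ℝ) ^ (g₀ + 1) / 2 * (G |u x - L| + G |a - L|) := by
    intro x
    have p := abs_nonneg (u x - L)
    have q := abs_nonneg (a - L)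
    have t : |u x - a| ≤ |u x - L| + |a - L| := by
      have := abs_sub_le (u x) L a
      rwa [abs_sub_comm L a] at this
    have m := hGm (Set.mem_Ici.2 (abs_nonneg (u x - a))) (show |u x - L| + |a - L| ∈ Set.Ici 0 from add_nonneg p q) t
    have c := hGv.2 (show 2 * |u x - L| ∈ Set.Ici 0 from by simp)
      (show 2 * |a - L| ∈ Set.Ici 0 from by simp) 
      (by norm_num : (0:ℝ) ≤ 1/2) (by norm_num : (0:ℝ) ≤ 1/2) (by norm_num)
    simp only [smul_eq_mul] at c
    rw [show 1/2 * (2 * |u x - L|) + 1/2 * (2 * |a - L|) = |u x - L| + |a - L| by ring] at c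
    linarith [hG2 _ p, hG2 _ q]
  have hint2 : Integrable (fun x => (2:ℝ) ^ (g₀ + 1) / 2 * (G |u x - L| + G |a - L|)) μ :=
    (hint.add (integrable_const _)).const_mul _
  calc ∫⁻ x, ENNReal.ofReal (G |u x - a|) ∂μ
      ≤ ∫⁻ x, ENNReal.ofReal ((2:ℝ) ^ (g₀ + 1) / 2 * (G |u x - L| + G |a - L|)) ∂μ :=
        lintegral_mono fun x => ENNReal.ofReal_le_ofReal (hpt x)
    _ = ENNReal.ofReal (∫ x, (2:ℝ) ^ (g₀ + 1) / 2 * (G |u x - L| + G |a - L|) ∂μ) := by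
        rw [ofReal_integral_eq_lintegral_ofReal hint2]
        exact Filter.Eventually.of_forall fun x =>
          mul_nonneg (by positivity) (add_nonneg (hGnn _ (abs_nonneg _)) (hGnn _ (abs_nonneg _)))
    _ ≤ ENNReal.ofReal ((2 : ℝ) ^ (g₀ + 1) * (g₀ + 1) * ∫ x, G |u x - L| ∂μ) := by
        apply ENNReal.ofReal_le_ofReal
        have hpos : 0 < μ.real Set.univ := measureReal_univ_pos
        rw [integral_const_mul, integral_add hint (integrable_const _), integral_const, smul_eq_mul]
        have hn : 0 ≤ ∫ x, G |u x - L| ∂μ := integral_nonneg fun x => hGnn _ (abs_nonneg _)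
        rw [average_eq, smul_eq_mul, inv_mul_eq_div, le_div_iff₀ hpos] at hJ
        have k := mul_le_mul_of_nonneg_right hCC hn
        have k2 := mul_le_mul_of_nonneg_left hJ hC.le
        linarith
    _ = _ := by
        rw [ENNReal.ofReal_mul (by nlinarith), ofReal_integral_eq_lintegral_ofReal hint]
        exact Filter.Eventually.of_forall fun x => hGnn _ (abs_nonneg _)
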